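/- Let n ≥ 2, f ∈ C¹(ℝ), and let u be a W^{3,1}_loc(ℝⁿ) stable solution of div(∇u/√(1+|∇u|²)) = −f(u) in ℝⁿ which is radially symmetric with respect to the origin. If u is nonconstant, then there exist c > 0 and R₀ > 2 such that ⨍_{B_{2R}∖B_R} |∇u|²/(1+|∇u|²)^{3/2} dx ≥ c R^{−n+2√(n−1)+2} for all R ≥ R₀. -/

import Mathlib

open MeasureTheory Metric Real Filter Asymptotics Bornology
open scoped RealInnerProductSpace Topology

noncomputable section

/-- Euclidean space `ℝⁿ`. -/
abbrev Euc (n : ℕ) := EuclideanSpace ℝ (Fin n)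

/-- `φ` is an admissible test function on `Ω`: smooth with compact support contained in `Ω`
(i.e. `φ ∈ C_c^∞(Ω)`). -/
def IsTestFun {n : ℕ} (Ω : Set (Euc n)) (φ : Euc n → ℝ) : Prop :=
  ContDiff ℝ (⊤ : ℕ∞) φ ∧ HasCompactSupport φ ∧ tsupport φ ⊆ Ω

/-- `u` is a weak solution of the mean curvature equation
`div(∇u/√(1+|∇u|²)) = -f(u)` in `Ω`:  `u ∈ W^{1,1}_loc(Ω)`, `f(u) ∈ L¹_loc(Ω)` and
`∫_Ω ∇u·∇φ/√(1+|∇u|²) = ∫_Ω f(u) φ` for every `φ ∈ C_c^∞(Ω)`. -/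
def IsWeakSolution {n : ℕ} (Ω : Set (Euc n)) (f : ℝ → ℝ) (u : Euc n → ℝ) : Prop :=
  LocallyIntegrableOn u Ω ∧
  LocallyIntegrableOn (fun x => ‖gradient u x‖) Ω ∧
  LocallyIntegrableOn (fun x => f (u x)) Ω ∧
  ∀ φ : Euc n → ℝ, IsTestFun Ω φ →
    ∫ x in Ω, ⟪gradient u x, gradient φ x⟫ / Real.sqrt (1 + ‖gradient u x‖ ^ 2)
      = ∫ x in Ω, f (u x) * φ x

/-- `u` is a stable solution of `div(∇u/√(1+|∇u|²)) = -f(u)` in `Ω`: it is a weak solution,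
`f'(u) ∈ L¹_loc(Ω)` and the second variation of the energy at `u` is nonnegative:
`∫_Ω f'(u) ξ² ≤ ∫_Ω (|∇ξ|²/√(1+|∇u|²) - (∇u·∇ξ)²/(1+|∇u|²)^{3/2})` for all `ξ ∈ C_c^∞(Ω)`. -/
def IsStableSolution {n : ℕ} (Ω : Set (Euc n)) (f : ℝ → ℝ) (u : Euc n → ℝ) : Prop :=
  IsWeakSolution Ω f u ∧
  LocallyIntegrableOn (fun x => deriv f (u x)) Ω ∧
  ∀ ξ : Euc n → ℝ, IsTestFun Ω ξ →
    ∫ x in Ω, deriv f (u x) * ξ x ^ 2 ≤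
      ∫ x in Ω, (‖gradient ξ x‖ ^ 2 / Real.sqrt (1 + ‖gradient u x‖ ^ 2)
        - ⟪gradient u x, gradient ξ x⟫ ^ 2 / (1 + ‖gradient u x‖ ^ 2) ^ ((3:ℝ)/2))

/-- A vector field `g` belongs to the Morrey space `M^p(Ω)`: there is `K > 0` with
`∫_{B_ρ(x₀) ∩ Ω} |g| ≤ K ρ^{n(1-1/p)}` for all `x₀ ∈ Ω` and `0 < ρ ≤ diam Ω`. -/
def MemMorrey {n : ℕ} (Ω : Set (Euc n)) (p : ℝ) (g : Euc n → Euc n) : Prop :=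
  ∃ K > (0:ℝ), ∀ x₀ ∈ Ω, ∀ ρ : ℝ, 0 < ρ → ρ ≤ Metric.diam Ω →
    ∫ x in Metric.ball x₀ ρ ∩ Ω, ‖g x‖ ≤ K * ρ ^ ((n : ℝ) * (1 - 1 / p))

/-!
Write `u = v(|x|)`. The weak equation restricted to radial test functions is an ordinary
differential equation for `v`. Testing stability with `ξ = (x · ∇u) z(|x|) = r v' z` and
integrating by parts, this equation eliminates both `f` and `v''`, leaving
`0 ≤ ∫ r^{n-1} W (((rz)')² - (n-1) z²) dr` over `(0, ∞)`, with `W = v'² / (1 + v'²)^{3/2}`.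

With `s = √(n-1)`, the second factor vanishes for `z = r^{-(s+1)}`. For the regularisation
`z = (1 + r²)^{-(s+1)/2}` it is negative on `(0, ∞)`, and cutting `z` off between `R` and `2R`
can make it positive only on `[R, 2R)`, where it is at most `C R^{-(2s+2)}`. Since `v'` does not
vanish identically, the gain on a fixed interval is a positive constant independent of `R`; it is
compensated by `C R^{-(2s+2)} ∫ r^{n-1} W dr` over `[R, 2R)`, and this integral is the annular
average up to a factor `R^n`.
-/

open scoped Convolution

section Mollification

variable {E F : Type*} [NormedAddCommGroup E] [NormedSpace ℝ E] [HasContDiffBump E]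
  [MeasurableSpace E] [BorelSpace E] [NormedAddCommGroup F] [NormedSpace ℝ F]
  {μ : Measure E}

lemma tendstoUniformly_normed_convolution [FiniteDimensional ℝ E] [CompleteSpace F]
    [μ.IsAddHaarMeasure] {ι : Type*} {l : Filter ι}
    {φ : ι → ContDiffBump (0 : E)} (hφ : Tendsto (fun i => (φ i).rOut) l (𝓝 0))
    {g : E → F} (hg : UniformContinuous g) :
    TendstoUniformly (fun i => (φ i).normed μ ⋆[ContinuousLinearMap.lsmul ℝ ℝ, μ] g) g l := by
  rw [Metric.tendstoUniformly_iff]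
  intro ε hε
  obtain ⟨δ, hδ, hgδ⟩ := Metric.uniformContinuous_iff.mp hg (ε / 2) (half_pos hε)
  filter_upwards [hφ.eventually_lt_const hδ] with i hi x
  rw [dist_comm]
  refine (ContDiffBump.dist_normed_convolution_le hg.continuous.aestronglyMeasurable
    fun y hy => (hgδ ?_).le).trans_lt (half_lt_self hε)
  exact (mem_ball.mp hy).trans hi

lemma tsupport_normed_convolution_subset [FiniteDimensional ℝ E] [IsLocallyFiniteMeasure μ]
    [μ.IsOpenPosMeasure] (φ : ContDiffBump (0 : E)) (g : E → F) :
    tsupport (φ.normed μ ⋆[ContinuousLinearMap.lsmul ℝ ℝ, μ] g) ⊆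
      cthickening φ.rOut (tsupport g) := by
  refine closure_minimal (fun x hx => ?_) isClosed_cthickening
  obtain ⟨y, hy, z, hz, rfl⟩ := Set.mem_add.mp (support_convolution_subset _ hx)
  rw [φ.support_normed_eq, mem_ball_zero_iff] at hy
  exact mem_cthickening_of_dist_le _ z _ _ (subset_tsupport g hz) (by simpa using hy.le)

lemma exists_contDiff_tendstoUniformly [FiniteDimensional ℝ E] {Ω : Set E} (hΩ : IsOpen Ω)
    {ξ : E → ℝ} (hξ : ContDiff ℝ 1 ξ) (hc : HasCompactSupport ξ) (hξΩ : tsupport ξ ⊆ Ω) :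
    ∃ K, IsCompact K ∧ K ⊆ Ω ∧ ∃ η : ℕ → E → ℝ,
      (∀ k, ContDiff ℝ (⊤ : ℕ∞) (η k)) ∧ (∀ k, tsupport (η k) ⊆ K) ∧
      TendstoUniformly η ξ atTop ∧
      TendstoUniformly (fun k => fderiv ℝ (η k)) (fderiv ℝ ξ) atTop := by
  obtain ⟨δ, hδ, hδΩ⟩ := hc.isCompact.exists_cthickening_subset_open hΩ hξΩ
  let φ (k : ℕ) : ContDiffBump (0 : E) :=
    ⟨δ / (k + 1) / 2, δ / (k + 1), by positivity, half_lt_self (by positivity)⟩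
  have hφδ (k : ℕ) : (φ k).rOut ≤ δ :=
    div_le_self hδ.le (by linarith [k.cast_nonneg (α := ℝ)])
  have hφ : Tendsto (fun k => (φ k).rOut) atTop (𝓝 0) :=
    by simpa [φ, div_eq_mul_inv] using tendsto_one_div_add_atTop_nhds_zero_nat.const_mul δ
  let η (k : ℕ) := (φ k).normed Measure.addHaar
    ⋆[ContinuousLinearMap.lsmul ℝ ℝ, Measure.addHaar] ξ
  have hfderiv (k : ℕ) : fderiv ℝ (η k) = (φ k).normed Measure.addHaar
      ⋆[ContinuousLinearMap.lsmul ℝ ℝ, Measure.addHaar] fderiv ℝ ξ :=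
    funext fun x => (hc.hasFDerivAt_convolution_right (ContinuousLinearMap.lsmul ℝ ℝ)
      (φ k).continuous_normed.locallyIntegrable hξ x).fderiv
  refine ⟨cthickening δ (tsupport ξ), hc.isCompact.cthickening, hδΩ, η, fun k => ?_, fun k => ?_,
    tendstoUniformly_normed_convolution hφ (hc.uniformContinuous_of_continuous hξ.continuous), ?_⟩
  · exact (φ k).hasCompactSupport_normed.contDiff_convolution_left _ (φ k).contDiff_normed
      hξ.continuous.locallyIntegrable
  · exact (tsupport_normed_convolution_subset (φ k) ξ).trans (cthickening_mono (hφδ k) _)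
  · simp only [hfderiv]
    exact tendstoUniformly_normed_convolution hφ
      ((hc.fderiv ℝ).uniformContinuous_of_continuous (hξ.continuous_fderiv one_ne_zero))

end Mollification

lemma tendsto_integral_of_tendstoUniformly {X Y : Type*} [TopologicalSpace X] [T2Space X]
    [MeasurableSpace X] [OpensMeasurableSpace X]
    {μ : Measure X} [IsFiniteMeasureOnCompacts μ] [NormedAddCommGroup Y] [ProperSpace Y]
    {G : X → Y → ℝ} (hG : Continuous fun q : X × Y => G q.1 q.2) {K : Set X} (hK : IsCompact K)
    {p : X → Y} {pₖ : ℕ → X → Y} (hp : Continuous p) (hpₖ : ∀ k, Continuous (pₖ k))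
    (hlim : TendstoUniformly pₖ p atTop) (hGK : ∀ k, ∀ x ∉ K, G x (pₖ k x) = 0) :
    Tendsto (fun k => ∫ x, G x (pₖ k x) ∂μ) atTop (𝓝 (∫ x, G x (p x) ∂μ)) := by
  obtain ⟨M, hM⟩ := hK.exists_bound_of_continuousOn hp.continuousOn
  obtain ⟨C, hC⟩ := (hK.prod (isCompact_closedBall (0 : Y) (M + 1))).exists_bound_of_continuousOn
    hG.continuousOn
  refine tendsto_integral_filter_of_dominated_convergence (K.indicator fun _ => C)
    (Eventually.of_forall fun k => ?_) ?_ ?_ (Eventually.of_forall fun x => ?_)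
  · exact (hG.comp (continuous_id.prodMk (hpₖ k))).aestronglyMeasurable
  · filter_upwards [Metric.tendstoUniformly_iff.mp hlim 1 one_pos] with k hk
    refine Eventually.of_forall fun x => ?_
    by_cases hx : x ∈ K
    · rw [Set.indicator_of_mem hx]
      refine hC (x, pₖ k x) ⟨hx, mem_closedBall_zero_iff.mpr ?_⟩
      have hdist := hk x
      rw [dist_comm, dist_eq_norm] at hdist
      linarith [norm_le_norm_add_norm_sub' (pₖ k x) (p x), hM x hx]
    · rw [Set.indicator_of_notMem hx, hGK k x hx, norm_zero]
  · exact (integrable_indicator_iff hK.measurableSet).mpr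
      (integrableOn_const hK.measure_lt_top.ne)
  · exact ((hG.comp (Continuous.prodMk_right x)).tendsto (p x)).comp (hlim.tendsto_at x)

lemma continuous_gradient {E : Type*} [NormedAddCommGroup E] [InnerProductSpace ℝ E]
    [CompleteSpace E] {u : E → ℝ} (hu : ContDiff ℝ 1 u) : Continuous (gradient u) :=
  (LinearIsometryEquiv.continuous _).comp (hu.continuous_fderiv one_ne_zero)

lemma IsStableSolution.integral_le_of_contDiff_one {n : ℕ} {Ω : Set (Euc n)} (hΩ : IsOpen Ω)
    {f : ℝ → ℝ} {u : Euc n → ℝ} (hf : ContDiff ℝ 1 f) (hu : ContDiff ℝ 1 u)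
    (hs : IsStableSolution Ω f u) {ξ : Euc n → ℝ} (hξ : ContDiff ℝ 1 ξ)
    (hc : HasCompactSupport ξ) (hξΩ : tsupport ξ ⊆ Ω) :
    ∫ x in Ω, deriv f (u x) * ξ x ^ 2 ≤
      ∫ x in Ω, (‖gradient ξ x‖ ^ 2 / √(1 + ‖gradient u x‖ ^ 2)
        - ⟪gradient u x, gradient ξ x⟫ ^ 2 / (1 + ‖gradient u x‖ ^ 2) ^ ((3 : ℝ) / 2)) := by
  obtain ⟨K, hK, hKΩ, η, hη, hηK, hlim, hlim'⟩ := exists_contDiff_tendstoUniformly hΩ hξ hc hξΩ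
  have hgrad : TendstoUniformly (fun k => gradient (η k)) (gradient ξ) atTop :=
    (InnerProductSpace.toDual ℝ (Euc n)).symm.isometry.uniformContinuous.comp_tendstoUniformly
      hlim'
  have hzero (k : ℕ) {x : Euc n} (hx : x ∉ K) : η k x = 0 ∧ gradient (η k) x = 0 := by
    have hev := notMem_tsupport_iff_eventuallyEq.mp fun h => hx (hηK k h)
    exact ⟨hev.eq_of_nhds, hev.gradient_eq.trans (gradient_fun_const x 0)⟩
  have hgu := continuous_gradient hu
  have hleft := tendsto_integral_of_tendstoUniformly (μ := volume.restrict Ω)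
    (G := fun x t => deriv f (u x) * t ^ 2)
    (by have := hf.continuous_deriv le_rfl; have := hu.continuous; fun_prop)
    hK hξ.continuous (fun k => (hη k).continuous) hlim (fun k x hx => by simp [(hzero k hx).1])
  have hright := tendsto_integral_of_tendstoUniformly (μ := volume.restrict Ω)
    (G := fun x p => ‖p‖ ^ 2 / √(1 + ‖gradient u x‖ ^ 2)
      - ⟪gradient u x, p⟫ ^ 2 / (1 + ‖gradient u x‖ ^ 2) ^ ((3 : ℝ) / 2))
    (by fun_prop (disch := intros; positivity))
    hK (continuous_gradient hξ) (fun k => continuous_gradient ((hη k).of_le (by simp)))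
    hgrad (fun k x hx => by simp [(hzero k hx).2])
  refine le_of_tendsto_of_tendsto' hleft hright fun k => hs.2.2 (η k) ⟨hη k, ?_, ?_⟩
  · exact hK.of_isClosed_subset (isClosed_tsupport _) (hηK k)
  · exact (hηK k).trans hKΩ

lemma hasCompactSupport_comp_norm {E : Type*} [NormedAddCommGroup E] [ProperSpace E]
    {ψ : ℝ → ℝ} (hψ : HasCompactSupport ψ) :
    HasCompactSupport fun x : E => ψ ‖x‖ := by
  rw [hasCompactSupport_iff_eventuallyEq, coclosedCompact_eq_cocompact] at hψ ⊢
  exact tendsto_norm_cocompact_atTop.eventually (atTop_le_cocompact hψ)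

section Radial

variable {E : Type*} [NormedAddCommGroup E] [InnerProductSpace ℝ E] {x : E} {φ ψ : ℝ → ℝ}

lemma hasGradientAt_comp_norm [CompleteSpace E] {φ' : ℝ} (hx : x ≠ 0)
    (hφ : HasDerivAt φ φ' ‖x‖) : HasGradientAt (fun y => φ ‖y‖) ((φ' / ‖x‖) • x) x := by
  have hsqrt : HasFDerivAt (fun y : E => √(‖y‖ ^ 2)) (‖x‖⁻¹ • innerSL ℝ x) x := by
    convert (hasStrictFDerivAt_norm_sq x).hasFDerivAt.sqrt (by positivity) using 1
    rw [sqrt_sq (norm_nonneg x), ← Nat.cast_smul_eq_nsmul ℝ, smul_smul]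
    congr 1
    field_simp
    norm_num
  simp only [sqrt_sq (norm_nonneg _)] at hsqrt
  rw [hasGradientAt_iff_hasFDerivAt, map_smul, div_eq_mul_inv, ← smul_smul]
  exact hφ.comp_hasFDerivAt x hsqrt

lemma gradient_comp_norm [CompleteSpace E] (hx : x ≠ 0) (hφ : DifferentiableAt ℝ φ ‖x‖) :
    gradient (fun y => φ ‖y‖) x = (deriv φ ‖x‖ / ‖x‖) • x :=
  (hasGradientAt_comp_norm hx hφ.hasDerivAt).gradient

lemma inner_gradient_comp_norm [CompleteSpace E] (hx : x ≠ 0) (hφ : DifferentiableAt ℝ φ ‖x‖)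
    (hψ : DifferentiableAt ℝ ψ ‖x‖) :
    ⟪gradient (fun y => φ ‖y‖) x, gradient (fun y => ψ ‖y‖) x⟫ =
      deriv φ ‖x‖ * deriv ψ ‖x‖ := by
  have := norm_ne_zero_iff.mpr hx
  rw [gradient_comp_norm hx hφ, gradient_comp_norm hx hψ, real_inner_smul_left,
    real_inner_smul_right, real_inner_self_eq_norm_sq]
  field_simp

lemma norm_gradient_comp_norm_sq [CompleteSpace E] (hx : x ≠ 0)
    (hφ : DifferentiableAt ℝ φ ‖x‖) :
    ‖gradient (fun y => φ ‖y‖) x‖ ^ 2 = deriv φ ‖x‖ ^ 2 := by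
  rw [← real_inner_self_eq_norm_sq, inner_gradient_comp_norm hx hφ hφ, sq]

lemma contDiff_comp_norm {k : WithTop ℕ∞} (hψ : ContDiff ℝ k ψ) (h0 : 0 ∉ tsupport ψ) :
    ContDiff ℝ k fun x : E => ψ ‖x‖ := by
  refine contDiff_iff_contDiffAt.mpr fun x => ?_
  by_cases hx : x = 0
  · have hnorm : Tendsto (fun y : E => ‖y‖) (𝓝 x) (𝓝 0) := hx ▸ tendsto_norm_zero
    exact contDiffAt_const.congr_of_eventuallyEq
      (hnorm.eventually (notMem_tsupport_iff_eventuallyEq.mp h0))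
  · exact hψ.contDiffAt.comp x (contDiffAt_norm ℝ hx)

lemma exists_contDiff_profile [Nontrivial E] {k : WithTop ℕ∞} {u : E → ℝ} {g : ℝ → ℝ}
    (hu : ContDiff ℝ k u) (hradial : ∀ x, u x = g ‖x‖) :
    ∃ v : ℝ → ℝ, ContDiff ℝ k v ∧ u = fun x => v ‖x‖ := by
  obtain ⟨e, he⟩ := exists_norm_eq E zero_le_one
  refine ⟨fun r => u (r • e), hu.comp (contDiff_id.smul contDiff_const), funext fun x => ?_⟩
  simp only [hradial, norm_smul, he, norm_norm, mul_one]

lemma contDiff_norm_mul_deriv_comp_norm [CompleteSpace E] {k : WithTop ℕ∞} {v : ℝ → ℝ}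
    (hv : Differentiable ℝ v) (hu : ContDiff ℝ (k + 1) fun x : E => v ‖x‖) :
    ContDiff ℝ k fun x : E => ‖x‖ * deriv v ‖x‖ := by
  have heuler : (fun x : E => ‖x‖ * deriv v ‖x‖) =
      fun x => fderiv ℝ (fun y : E => v ‖y‖) x x := by
    funext x
    rcases eq_or_ne x 0 with rfl | hx
    · simp only [norm_zero, zero_mul, map_zero]
    · have := norm_ne_zero_iff.mpr hx
      rw [← inner_gradient_left, gradient_comp_norm hx (hv _), real_inner_smul_left,
        real_inner_self_eq_norm_sq]
      field_simp
  rw [heuler]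
  exact (hu.fderiv_right le_rfl).clm_apply contDiff_id

end Radial

section Annulus

variable {E : Type*} [NormedAddCommGroup E] [NormedSpace ℝ E] [FiniteDimensional ℝ E]
  [MeasurableSpace E] (μ : Measure E) [μ.IsAddHaarMeasure]

lemma finrank_mul_measureReal_ball_pos [Nontrivial E] :
    0 < Module.finrank ℝ E * μ.real (ball 0 1) :=
  mul_pos (Nat.cast_pos.mpr Module.finrank_pos)
    (ENNReal.toReal_pos (measure_ball_pos _ _ one_pos).ne' measure_ball_lt_top.ne)

variable [BorelSpace E]

lemma measureReal_annulus {a b : ℝ} (ha : 0 < a) (hab : a ≤ b) :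
    μ.real (ball 0 b \ ball 0 a) =
      (b ^ Module.finrank ℝ E - a ^ Module.finrank ℝ E) * μ.real (ball 0 1) := by
  rw [measureReal_sdiff (ball_subset_ball hab) measurableSet_ball, Measure.real,
    Measure.real, Measure.real, Measure.addHaar_ball_of_pos μ _ ha,
    Measure.addHaar_ball_of_pos μ _ (ha.trans_le hab), ENNReal.toReal_mul, ENNReal.toReal_mul,
    ENNReal.toReal_ofReal (pow_nonneg ha.le _),
    ENNReal.toReal_ofReal (pow_nonneg (ha.le.trans hab) _), sub_mul]

variable [Nontrivial E]

lemma integral_eq_of_eq_comp_norm {F : E → ℝ} {G : ℝ → ℝ} (hFG : ∀ x ≠ 0, F x = G ‖x‖) :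
    ∫ x, F x ∂μ = Module.finrank ℝ E * μ.real (ball 0 1) *
      ∫ r in Set.Ioi (0 : ℝ), r ^ (Module.finrank ℝ E - 1) * G r := by
  have hae : F =ᵐ[μ] fun x => G ‖x‖ := by
    filter_upwards [measure_eq_zero_iff_ae_notMem.mp (measure_singleton (μ := μ) (0 : E))]
      with x hx using hFG x hx
  rw [integral_congr_ae hae, integral_fun_norm_addHaar]
  simp only [nsmul_eq_mul, smul_eq_mul, mul_assoc]

lemma setAverage_annulus_eq {F : E → ℝ} {G : ℝ → ℝ} {a b : ℝ} (ha : 0 < a) (hab : a < b)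
    (hFG : ∀ x ≠ 0, F x = G ‖x‖) :
    ⨍ x in ball 0 b \ ball 0 a, F x ∂μ =
      Module.finrank ℝ E / (b ^ Module.finrank ℝ E - a ^ Module.finrank ℝ E) *
        ∫ r in Set.Ico a b, r ^ (Module.finrank ℝ E - 1) * G r := by
  set d := Module.finrank ℝ E
  have hind : ∀ x ≠ 0,
      (ball 0 b \ ball 0 a).indicator F x = (Set.Ico a b).indicator G ‖x‖ := fun x hx => by
    have hmem : x ∈ ball (0 : E) b \ ball 0 a ↔ ‖x‖ ∈ Set.Ico a b := by
      rw [Set.mem_sdiff, mem_ball_zero_iff, mem_ball_zero_iff, not_lt, and_comm, Set.mem_Ico]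
    by_cases h : ‖x‖ ∈ Set.Ico a b
    · rw [Set.indicator_of_mem (hmem.mpr h), Set.indicator_of_mem h, hFG x hx]
    · rw [Set.indicator_of_notMem (mt hmem.mp h), Set.indicator_of_notMem h]
  have hIco : Set.Ioi (0 : ℝ) ∩ Set.Ico a b = Set.Ico a b :=
    Set.inter_eq_right.mpr fun r hr => ha.trans_le hr.1
  have hint : ∫ x in ball 0 b \ ball 0 a, F x ∂μ =
      d * μ.real (ball 0 1) * ∫ r in Set.Ico a b, r ^ (d - 1) * G r := by
    rw [← integral_indicator (measurableSet_ball.diff measurableSet_ball),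
      integral_eq_of_eq_comp_norm μ hind, ← hIco, ← setIntegral_indicator measurableSet_Ico,
      hIco]
    simp only [Set.indicator_mul_right]
    rfl
  have hvol : μ.real (ball 0 b \ ball 0 a) = (b ^ d - a ^ d) * μ.real (ball 0 1) :=
    measureReal_annulus μ ha hab.le
  have hball : μ.real (ball (0 : E) 1) ≠ 0 :=
    right_ne_zero_of_mul (finrank_mul_measureReal_ball_pos μ).ne'
  rw [setAverage_eq, hint, hvol, smul_eq_mul]
  field_simp

end Annulus

section SlopeFlux

/-- The flux `p / √(1 + p²)` of the mean curvature operator in the direction of the gradient,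
as a function of the slope `p`. -/
def slopeFlux (p : ℝ) : ℝ := p / √(1 + p ^ 2)

/-- The weight `p² / (1 + p²)^{3/2}` carried by a slope `p`, that is `p²` times the derivative of
`slopeFlux`; it is the integrand whose annular averages are estimated. -/
def slopeWeight (p : ℝ) : ℝ := p ^ 2 / (1 + p ^ 2) ^ ((3 : ℝ) / 2)

lemma rpow_three_halves {x : ℝ} (hx : 0 ≤ x) : x ^ ((3 : ℝ) / 2) = √x ^ 3 := by
  rw [sqrt_eq_rpow, ← rpow_mul_natCast hx]
  norm_num

lemma hasDerivAt_slopeFlux (p : ℝ) :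
    HasDerivAt slopeFlux (1 / (1 + p ^ 2) ^ ((3 : ℝ) / 2)) p := by
  have hpos : 0 < 1 + p ^ 2 := by positivity
  have hquad : HasDerivAt (fun q : ℝ => 1 + q ^ 2) (2 * p) p := by
    simpa using (hasDerivAt_pow 2 p).const_add 1
  refine ((hasDerivAt_id' p).div (hquad.sqrt hpos.ne') (sqrt_pos.mpr hpos).ne').congr_deriv ?_
  rw [rpow_three_halves hpos.le]
  have hsq := sq_sqrt hpos.le
  field_simp
  rw [hsq]
  ring

lemma contDiff_slopeFlux {k : WithTop ℕ∞} : ContDiff ℝ k slopeFlux := by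
  have hpos (p : ℝ) : 0 < 1 + p ^ 2 := by positivity
  exact contDiff_id.div (ContDiff.sqrt (by fun_prop) fun p => (hpos p).ne')
    fun p => (sqrt_pos.mpr (hpos p)).ne'

lemma slopeWeight_nonneg (p : ℝ) : 0 ≤ slopeWeight p := by
  unfold slopeWeight
  positivity

lemma slopeWeight_pos {p : ℝ} (hp : p ≠ 0) : 0 < slopeWeight p := by
  unfold slopeWeight
  positivity

lemma continuous_slopeWeight : Continuous slopeWeight := by
  unfold slopeWeight
  fun_prop (disch := intros; positivity)

lemma slopeWeight_le_slopeFlux_mul (p : ℝ) : slopeWeight p ≤ slopeFlux p * p := by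
  rw [slopeFlux, slopeWeight, sqrt_eq_rpow, div_mul_eq_mul_div, ← sq]
  gcongr
  · exact le_add_of_nonneg_right (sq_nonneg p)
  · norm_num

/-- In the direction of the gradient the second variation of the area integrand loses two powers
of `√(1 + p²)`. -/
lemma sq_div_sqrt_sub_eq (p q : ℝ) :
    q ^ 2 / √(1 + p ^ 2) - (p * q) ^ 2 / (1 + p ^ 2) ^ ((3 : ℝ) / 2) =
      1 / (1 + p ^ 2) ^ ((3 : ℝ) / 2) * q ^ 2 := by
  have hpos : 0 < 1 + p ^ 2 := by positivity
  have hsq := sq_sqrt hpos.le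
  rw [rpow_three_halves hpos.le]
  field_simp
  rw [hsq]
  ring

end SlopeFlux

section RadialEquation

lemma eqOn_deriv_neg_of_forall_integral_mul_deriv_eq {U : Set ℝ} (hU : IsOpen U) {Q h : ℝ → ℝ}
    (hQ : ContDiff ℝ 1 Q) (hh : Continuous h)
    (hQh : ∀ ψ : ℝ → ℝ, ContDiff ℝ (⊤ : ℕ∞) ψ → HasCompactSupport ψ → tsupport ψ ⊆ U →
      ∫ r, Q r * deriv ψ r = ∫ r, h r * ψ r) :
    Set.EqOn (deriv Q) (-h) U := by
  have hQ' : Continuous (deriv Q) := hQ.continuous_deriv le_rfl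
  have hzero : ∀ ψ : ℝ → ℝ, ContDiff ℝ (⊤ : ℕ∞) ψ → HasCompactSupport ψ → tsupport ψ ⊆ U →
      ∫ r, ψ r • (deriv Q r + h r) = 0 := fun ψ hψ hc hψU => by
    have hψ' : Continuous (deriv ψ) := hψ.continuous_deriv (by simp)
    have hi {q : ℝ → ℝ} (hq : Continuous q) : Integrable fun r => q r * ψ r :=
      (hq.mul hψ.continuous).integrable_of_hasCompactSupport hc.mul_left
    have hparts := integral_mul_deriv_eq_deriv_mul_of_integrable
      (fun r _ => (hQ.differentiable one_ne_zero r).hasDerivAt)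
      (fun r _ => (hψ.differentiable (by simp) r).hasDerivAt)
      ((hQ.continuous.mul hψ').integrable_of_hasCompactSupport hc.deriv.mul_left)
      (hi hQ') (hi hQ.continuous)
    simp only [smul_eq_mul, mul_comm (ψ _), add_mul]
    rw [integral_add (hi hQ') (hi hh), ← hQh ψ hψ hc hψU]
    linarith
  have hae := hU.ae_eq_zero_of_integral_contDiff_smul_eq_zero (μ := volume)
    ((hQ'.add hh).locallyIntegrable.locallyIntegrableOn U) hzero
  have heq : Set.EqOn (fun r => deriv Q r + h r) (fun _ => 0) U :=
    Measure.eqOn_open_of_ae_eq ((ae_restrict_iff' hU.measurableSet).mpr hae) hU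
      (hQ'.add hh).continuousOn continuousOn_const
  exact fun r hr => eq_neg_of_add_eq_zero_left (heq hr)

variable {n : ℕ} [NeZero n] {f v : ℝ → ℝ}

lemma IsWeakSolution.integral_radial_eq
    (hs : IsWeakSolution Set.univ f fun x : Euc n => v ‖x‖) (hv : Differentiable ℝ v)
    {ψ : ℝ → ℝ} (hψ : ContDiff ℝ (⊤ : ℕ∞) ψ) (hc : HasCompactSupport ψ)
    (hψ0 : tsupport ψ ⊆ Set.Ioi 0) :
    ∫ r, r ^ (n - 1) * slopeFlux (deriv v r) * deriv ψ r = ∫ r, r ^ (n - 1) * f (v r) * ψ r := by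
  have htest : IsTestFun Set.univ fun x : Euc n => ψ ‖x‖ :=
    ⟨contDiff_comp_norm hψ fun h0 => lt_irrefl (0 : ℝ) (hψ0 h0), hasCompactSupport_comp_norm hc,
      Set.subset_univ _⟩
  have hflux : ∀ x : Euc n, x ≠ 0 →
      ⟪gradient (fun x => v ‖x‖) x, gradient (fun x => ψ ‖x‖) x⟫ /
        √(1 + ‖gradient (fun x => v ‖x‖) x‖ ^ 2) =
      slopeFlux (deriv v ‖x‖) * deriv ψ ‖x‖ := fun x hx => by
    rw [inner_gradient_comp_norm hx (hv _) (hψ.differentiable (by simp) _),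
      norm_gradient_comp_norm_sq hx (hv _), slopeFlux, div_mul_eq_mul_div]
  have hweak := hs.2.2.2 _ htest
  rw [setIntegral_univ, setIntegral_univ, integral_eq_of_eq_comp_norm volume
      (G := fun r => slopeFlux (deriv v r) * deriv ψ r) hflux,
    integral_eq_of_eq_comp_norm volume (G := fun r => f (v r) * ψ r) fun _ _ => rfl] at hweak
  have hradial := mul_left_cancel₀ (finrank_mul_measureReal_ball_pos volume).ne' hweak
  have hψzero {r : ℝ} (hr : r ∉ Set.Ioi 0) : ψ r = 0 :=
    image_eq_zero_of_notMem_tsupport fun h => hr (hψ0 h)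
  have hψ'zero {r : ℝ} (hr : r ∉ Set.Ioi 0) : deriv ψ r = 0 :=
    image_eq_zero_of_notMem_tsupport fun h => hr (hψ0 (tsupport_deriv_subset h))
  rw [setIntegral_eq_integral_of_forall_compl_eq_zero fun r hr => by simp [hψ'zero hr],
    setIntegral_eq_integral_of_forall_compl_eq_zero fun r hr => by simp [hψzero hr]] at hradial
  simpa only [finrank_euclideanSpace, Fintype.card_fin, mul_assoc] using hradial

lemma IsWeakSolution.radial_ode (hs : IsWeakSolution Set.univ f fun x : Euc n => v ‖x‖)
    (hf : Continuous f) (hv : ContDiff ℝ 2 v) {r : ℝ} (hr : 0 < r) :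
    r * f (v r) + r * deriv (fun t => slopeFlux (deriv v t)) r
      + ((n : ℝ) - 1) * slopeFlux (deriv v r) = 0 := by
  obtain ⟨d, rfl⟩ : ∃ d, n = d + 1 := Nat.exists_eq_succ_of_ne_zero (NeZero.ne n)
  have hP : ContDiff ℝ 1 fun t => slopeFlux (deriv v t) :=
    contDiff_slopeFlux.comp (contDiff_succ_iff_deriv.mp hv).2.2
  have hweak := eqOn_deriv_neg_of_forall_integral_mul_deriv_eq isOpen_Ioi
    (Q := fun r => r ^ d * slopeFlux (deriv v r)) (h := fun r => r ^ d * f (v r))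
    ((contDiff_id.pow d).mul hP) ((continuous_pow d).mul (hf.comp hv.continuous)) fun _ hψ hc hψ0 =>
      hs.integral_radial_eq (hv.differentiable two_ne_zero) hψ hc hψ0
  have hflux := ((hasDerivAt_pow d r).mul (hP.differentiable one_ne_zero r).hasDerivAt).deriv
  have hpow : r * (d * r ^ (d - 1)) = d * r ^ d := by
    rcases d with - | d
    · simp
    · rw [Nat.add_sub_cancel, pow_succ]; ring
  have heq : _ = -(r ^ d * f (v r)) := hflux.symm.trans (hweak hr)
  refine (mul_right_injective₀ (pow_pos hr d).ne') ?_
  push_cast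
  linear_combination r * heq - slopeFlux (deriv v r) * hpow

end RadialEquation

lemma integrable_mul_sq_of_hasCompactSupport {X : Type*} [TopologicalSpace X]
    [MeasurableSpace X] [OpensMeasurableSpace X] {μ : Measure X} [IsFiniteMeasureOnCompacts μ]
    {q p : X → ℝ} (hq : Continuous q) (hp : Continuous p) (hc : HasCompactSupport p) :
    Integrable (fun x => q x * p x ^ 2) μ := by
  simp only [sq]
  exact (hq.mul (hp.mul hp)).integrable_of_hasCompactSupport hc.mul_left.mul_left

lemma setIntegral_nonneg_of_sub_le_sub_deriv {S L G Φ : ℝ → ℝ} {a : ℝ} (hΦ : ContDiff ℝ 1 Φ)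
    (hc : HasCompactSupport Φ) (hΦa : Φ a = 0) (hS : IntegrableOn S (Set.Ioi a))
    (hL : IntegrableOn L (Set.Ioi a)) (hG : IntegrableOn G (Set.Ioi a))
    (hLS : ∫ r in Set.Ioi a, L r ≤ ∫ r in Set.Ioi a, S r)
    (hle : ∀ r > a, S r - L r ≤ G r - deriv Φ r) : 0 ≤ ∫ r in Set.Ioi a, G r := by
  have hΦ' : IntegrableOn (deriv Φ) (Set.Ioi a) :=
    ((hΦ.continuous_deriv le_rfl).integrable_of_hasCompactSupport hc.deriv).integrableOn
  calc 0 ≤ ∫ r in Set.Ioi a, (S r - L r) := by rw [integral_sub hS hL]; exact sub_nonneg.mpr hLS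
    _ ≤ ∫ r in Set.Ioi a, (G r - deriv Φ r) :=
      setIntegral_mono_on (hS.sub hL) (hG.sub hΦ') measurableSet_Ioi hle
    _ = ∫ r in Set.Ioi a, G r := by
      rw [integral_sub hG hΦ', hc.integral_Ioi_deriv_eq hΦ a, hΦa, neg_zero, sub_zero]

/-- The integrand `((rz)')² - c z²` of Hardy's inequality on the half-line, for the function
`r ↦ r z(r)`. -/
def hardyIntegrand (c : ℝ) (z : ℝ → ℝ) (r : ℝ) : ℝ := (z r + r * deriv z r) ^ 2 - c * z r ^ 2

lemma continuous_hardyIntegrand {c : ℝ} {z : ℝ → ℝ} (hz : ContDiff ℝ 1 z) :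
    Continuous (hardyIntegrand c z) := by
  have := hz.continuous
  have := hz.continuous_deriv le_rfl
  unfold hardyIntegrand
  fun_prop

lemma hasCompactSupport_hardyIntegrand {c : ℝ} {z : ℝ → ℝ} (hz : HasCompactSupport z) :
    HasCompactSupport (hardyIntegrand c z) := by
  have hrz : HasCompactSupport fun r => z r + r * deriv z r := hz.add hz.deriv.mul_left
  unfold hardyIntegrand
  simp only [sq, sub_eq_add_neg]
  exact hrz.mul_left.add (HasCompactSupport.neg (hz.mul_left.mul_left))

lemma hardyIntegrand_congr {c : ℝ} {z y : ℝ → ℝ} {r : ℝ} (h : z =ᶠ[𝓝 r] y) :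
    hardyIntegrand c z r = hardyIntegrand c y r := by
  rw [hardyIntegrand, hardyIntegrand, h.eq_of_nhds, h.deriv_eq]

section RadialStability

variable {n : ℕ} [NeZero n] {f v z : ℝ → ℝ}

lemma IsStableSolution.integral_radial_le
    (hs : IsStableSolution Set.univ f fun x : Euc n => v ‖x‖) (hf : ContDiff ℝ 1 f)
    (hv : Differentiable ℝ v) (hu : ContDiff ℝ 1 fun x : Euc n => v ‖x‖) {ψ : ℝ → ℝ}
    (hψ : Differentiable ℝ ψ) (hξ : ContDiff ℝ 1 fun x : Euc n => ψ ‖x‖)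
    (hc : HasCompactSupport ψ) :
    ∫ r in Set.Ioi (0 : ℝ), r ^ (n - 1) * deriv f (v r) * ψ r ^ 2 ≤
      ∫ r in Set.Ioi (0 : ℝ),
        r ^ (n - 1) * (1 / (1 + deriv v r ^ 2) ^ ((3 : ℝ) / 2)) * deriv ψ r ^ 2 := by
  have hquad : ∀ x : Euc n, x ≠ 0 →
      ‖gradient (fun x => ψ ‖x‖) x‖ ^ 2 / √(1 + ‖gradient (fun x => v ‖x‖) x‖ ^ 2)
        - ⟪gradient (fun x => v ‖x‖) x, gradient (fun x => ψ ‖x‖) x⟫ ^ 2 /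
          (1 + ‖gradient (fun x => v ‖x‖) x‖ ^ 2) ^ ((3 : ℝ) / 2) =
      1 / (1 + deriv v ‖x‖ ^ 2) ^ ((3 : ℝ) / 2) * deriv ψ ‖x‖ ^ 2 := fun x hx => by
    rw [inner_gradient_comp_norm hx (hv _) (hψ _), norm_gradient_comp_norm_sq hx (hv _),
      norm_gradient_comp_norm_sq hx (hψ _), sq_div_sqrt_sub_eq]
  have hstable := hs.integral_le_of_contDiff_one isOpen_univ hf hu hξ
    (hasCompactSupport_comp_norm hc) (Set.subset_univ _)
  rw [setIntegral_univ, setIntegral_univ,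
    integral_eq_of_eq_comp_norm volume (G := fun r => deriv f (v r) * ψ r ^ 2) fun _ _ => rfl,
    integral_eq_of_eq_comp_norm volume
      (G := fun r => 1 / (1 + deriv v r ^ 2) ^ ((3 : ℝ) / 2) * deriv ψ r ^ 2) hquad,
    finrank_euclideanSpace, Fintype.card_fin] at hstable
  simp only [mul_assoc (_ ^ _)]
  refine le_of_mul_le_mul_left hstable ?_
  simpa only [finrank_euclideanSpace, Fintype.card_fin] using
    finrank_mul_measureReal_ball_pos (volume : Measure (Euc n))

/-- Because of the radial equation, testing stability with `r v' z` gives, up to an exact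
derivative, an integrand that involves neither `f` nor `v''`. -/
lemma exists_contDiff_integrand_eq_sub_deriv {d : ℕ} (hf : ContDiff ℝ 1 f) (hv : ContDiff ℝ 2 v)
    (hz : ContDiff ℝ 1 z) (hc : HasCompactSupport z)
    (hode : ∀ r > 0, r * f (v r) + r * deriv (fun t => slopeFlux (deriv v t)) r
      + d * slopeFlux (deriv v r) = 0) :
    ∃ Φ : ℝ → ℝ, ContDiff ℝ 1 Φ ∧ HasCompactSupport Φ ∧ Φ 0 = 0 ∧ ∀ r > 0,
      r ^ d * (1 / (1 + deriv v r ^ 2) ^ ((3 : ℝ) / 2)) *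
          deriv (fun t => t * deriv v t * z t) r ^ 2
        - r ^ d * deriv f (v r) * (r * deriv v r * z r) ^ 2 =
      r ^ d * (slopeWeight (deriv v r) * (z r + r * deriv z r) ^ 2
        - d * (slopeFlux (deriv v r) * deriv v r) * z r ^ 2) - deriv Φ r := by
  have hw : ContDiff ℝ 1 (deriv v) := (contDiff_succ_iff_deriv.mp hv).2.2
  refine ⟨fun r => (r ^ (d + 2) * f (v r) + d * r ^ (d + 1) * slopeFlux (deriv v r)) *
    deriv v r * z r ^ 2, ?_, ?_, by simp, fun r hr => ?_⟩
  · have hv1 : ContDiff ℝ 1 v := hv.of_le one_le_two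
    have hflux : ContDiff ℝ 1 slopeFlux := contDiff_slopeFlux
    fun_prop
  · simp only [sq (z _)]
    exact hc.mul_left.mul_left
  set v' := deriv v r
  set m := 1 / (1 + v' ^ 2) ^ ((3 : ℝ) / 2) with hm
  have dv : HasDerivAt v v' r := (hv.differentiable two_ne_zero r).hasDerivAt
  have dw := (hw.differentiable one_ne_zero r).hasDerivAt
  have dz := (hz.differentiable one_ne_zero r).hasDerivAt
  have dP : HasDerivAt (fun t => slopeFlux (deriv v t)) (m * deriv (deriv v) r) r :=
    (hasDerivAt_slopeFlux v').comp (h := deriv v) r dw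
  have df : HasDerivAt (fun t => f (v t)) (deriv f (v r) * v') r :=
    ((hf.differentiable one_ne_zero) (v r)).hasDerivAt.comp r dv
  have dψ : HasDerivAt (fun t => t * deriv v t * z t)
      ((v' + r * deriv (deriv v) r) * z r + r * v' * deriv z r) r :=
    (((hasDerivAt_id' r).mul dw).mul dz).congr_deriv (by rw [one_mul]; rfl)
  have dΦ := (((((hasDerivAt_pow (d + 2) r).fun_mul df).fun_add
    (((hasDerivAt_pow (d + 1) r).const_mul (d : ℝ)).fun_mul dP)).fun_mul dw).fun_mul
      (dz.fun_pow 2)).deriv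
  have hode_r := hode r hr
  rw [dP.deriv] at hode_r
  have hweight : slopeWeight v' = v' ^ 2 * m := by rw [slopeWeight, hm, mul_one_div]
  rw [dψ.deriv, dΦ, hweight, Nat.add_sub_cancel, show d + 2 - 1 = d + 1 from rfl]
  push_cast
  linear_combination ((d + 2) * r ^ d * v' * z r ^ 2 + r ^ (d + 1) *
    (deriv (deriv v) r * z r ^ 2 + 2 * v' * z r * deriv z r)) * hode_r

lemma IsStableSolution.integral_slopeWeight_nonneg
    (hs : IsStableSolution Set.univ f fun x : Euc n => v ‖x‖) (hf : ContDiff ℝ 1 f)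
    (hv : ContDiff ℝ 2 v) (hu : ContDiff ℝ 2 fun x : Euc n => v ‖x‖) (hz : ContDiff ℝ 1 z)
    (hz' : ContDiff ℝ 1 fun x : Euc n => z ‖x‖) (hc : HasCompactSupport z) :
    0 ≤ ∫ r in Set.Ioi (0 : ℝ),
      r ^ (n - 1) * slopeWeight (deriv v r) * hardyIntegrand ((n : ℝ) - 1) z r := by
  obtain ⟨d, rfl⟩ : ∃ d, n = d + 1 := Nat.exists_eq_succ_of_ne_zero (NeZero.ne n)
  have hd : ((d + 1 : ℕ) : ℝ) - 1 = d := by push_cast; ring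
  obtain ⟨Φ, hΦ, hΦc, hΦ0, hid⟩ := exists_contDiff_integrand_eq_sub_deriv hf hv hz hc
    fun r hr => by simpa only [hd] using hs.1.radial_ode hf.continuous hv hr
  have hw : ContDiff ℝ 1 (deriv v) := (contDiff_succ_iff_deriv.mp hv).2.2
  have hψ : ContDiff ℝ 1 fun r => r * deriv v r * z r := (contDiff_id.mul hw).mul hz
  have hψc : HasCompactSupport fun r => r * deriv v r * z r := hc.mul_left
  have hstable := hs.integral_radial_le hf (hv.differentiable two_ne_zero) (hu.of_le one_le_two)
    (hψ.differentiable one_ne_zero)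
    ((contDiff_norm_mul_deriv_comp_norm (hv.differentiable two_ne_zero) hu).mul hz') hψc
  rw [hd]
  rw [Nat.add_sub_cancel] at hstable ⊢
  have hm : Continuous fun r => r ^ d * (1 / (1 + deriv v r ^ 2) ^ ((3 : ℝ) / 2)) := by
    have := hw.continuous
    fun_prop (disch := intros; positivity)
  have hf' : Continuous fun r => r ^ d * deriv f (v r) :=
    (continuous_pow d).mul ((hf.continuous_deriv le_rfl).comp hv.continuous)
  have hW : Continuous fun r => r ^ d * slopeWeight (deriv v r) :=
    (continuous_pow d).mul (continuous_slopeWeight.comp hw.continuous)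
  have iS := (integrable_mul_sq_of_hasCompactSupport (μ := volume) hm (hψ.continuous_deriv le_rfl)
    hψc.deriv).integrableOn (s := Set.Ioi 0)
  have iL := (integrable_mul_sq_of_hasCompactSupport (μ := volume) hf' hψ.continuous
    hψc).integrableOn (s := Set.Ioi 0)
  have iG : IntegrableOn (fun r => r ^ d * slopeWeight (deriv v r) * hardyIntegrand d z r)
      (Set.Ioi 0) :=
    ((hW.mul (continuous_hardyIntegrand hz)).integrable_of_hasCompactSupport
      (hasCompactSupport_hardyIntegrand hc).mul_left).integrableOn
  refine setIntegral_nonneg_of_sub_le_sub_deriv hΦ hΦc hΦ0 iS iL iG hstable fun r hr => ?_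
  have hle := mul_le_mul_of_nonneg_left (slopeWeight_le_slopeFlux_mul (deriv v r))
    (show 0 ≤ r ^ d * d * z r ^ 2 by positivity)
  rw [hardyIntegrand]
  linarith [hid r hr]

end RadialStability

section TruncatedPower

/-- The regularisation `(1 + r²)^{-(s+1)/2}` of the power `r^{-(s+1)}`, for which Hardy's
inequality with constant `s²` is an equality. -/
def regularizedPower (s r : ℝ) : ℝ := (1 + r ^ 2) ^ (-(s + 1) / 2)

/-- A fixed smooth cutoff on the line, equal to `1` on `[-1, 1]` and to `0` outside
`[-3/2, 3/2]`. -/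
def unitCutoff : ContDiffBump (0 : ℝ) := ⟨1, 3 / 2, one_pos, by norm_num⟩

/-- The radial test profile: `regularizedPower s` cut off between the radii `R` and `2R`. -/
def truncatedPower (s R r : ℝ) : ℝ := regularizedPower s r * unitCutoff (r / R)

variable {s R r : ℝ}

lemma regularizedPower_pos : 0 < regularizedPower s r := by
  unfold regularizedPower
  positivity

lemma regularizedPower_sq_le (hs : -1 ≤ s) (hR : 0 < R) (hr : R ≤ r) :
    regularizedPower s r ^ 2 ≤ R ^ (-(2 * s + 2)) := by
  calc regularizedPower s r ^ 2 = (1 + r ^ 2) ^ (-(s + 1)) := by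
        rw [regularizedPower, ← rpow_mul_natCast (by positivity), Nat.cast_two,
          div_mul_cancel₀ _ two_ne_zero]
    _ ≤ (R ^ 2) ^ (-(s + 1)) :=
        rpow_le_rpow_of_nonpos (by positivity) (by nlinarith) (by linarith)
    _ = R ^ (-(2 * s + 2)) := by
        rw [← rpow_natCast_mul hR.le, Nat.cast_two]
        ring_nf

lemma contDiff_regularizedPower {k : WithTop ℕ∞} : ContDiff ℝ k (regularizedPower s) :=
  ContDiff.rpow_const_of_ne (by fun_prop) fun r => by positivity

lemma contDiff_regularizedPower_comp_norm {E : Type*} [NormedAddCommGroup E]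
    [InnerProductSpace ℝ E] {k : WithTop ℕ∞} :
    ContDiff ℝ k fun x : E => regularizedPower s ‖x‖ :=
  ContDiff.rpow_const_of_ne (contDiff_const.add (contDiff_norm_sq ℝ)) fun x => by positivity

lemma regularizedPower_add_mul_deriv :
    regularizedPower s r + r * deriv (regularizedPower s) r =
      regularizedPower s r * ((1 - s * r ^ 2) / (1 + r ^ 2)) := by
  have hpos : 0 < 1 + r ^ 2 := by positivity
  have hquad : HasDerivAt (fun t : ℝ => 1 + t ^ 2) (2 * r) r := by
    simpa using (hasDerivAt_pow 2 r).const_add 1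
  have hderiv : deriv (regularizedPower s) r = _ :=
    (hquad.rpow_const (p := -(s + 1) / 2) (Or.inl hpos.ne')).deriv
  rw [hderiv, rpow_sub_one hpos.ne', ← regularizedPower]
  field_simp
  ring

lemma abs_div_one_add_sq_lt (hs : 1 ≤ s) (hr : r ≠ 0) :
    |(1 - s * r ^ 2) / (1 + r ^ 2)| < s := by
  have hpos : 0 < 1 + r ^ 2 := by positivity
  have hr2 : 0 < r ^ 2 := by positivity
  rw [abs_div, abs_of_pos hpos, div_lt_iff₀ hpos, abs_lt]
  constructor <;> nlinarith

lemma hardyIntegrand_regularizedPower_neg (hs : 1 ≤ s) (hr : r ≠ 0) :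
    hardyIntegrand (s ^ 2) (regularizedPower s) r < 0 := by
  have hlt : ((1 - s * r ^ 2) / (1 + r ^ 2)) ^ 2 < s ^ 2 :=
    sq_lt_sq.mpr ((abs_div_one_add_sq_lt hs hr).trans_le (le_abs_self s))
  rw [hardyIntegrand, regularizedPower_add_mul_deriv, mul_pow, mul_comm (s ^ 2), ← mul_sub]
  exact mul_neg_of_pos_of_neg (pow_pos regularizedPower_pos 2) (sub_neg.mpr hlt)

lemma exists_abs_mul_deriv_unitCutoff_le : ∃ M, ∀ t, |t * deriv unitCutoff t| ≤ M :=
  (unitCutoff.hasCompactSupport.deriv.mul_left).exists_bound_of_continuous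
    (continuous_id.mul (unitCutoff.contDiff.continuous_deriv le_rfl))

lemma contDiff_truncatedPower {k : ℕ∞} : ContDiff ℝ k (truncatedPower s R) :=
  contDiff_regularizedPower.mul (unitCutoff.contDiff.comp (contDiff_id.div_const R))

lemma contDiff_truncatedPower_comp_norm {E : Type*} [NormedAddCommGroup E]
    [InnerProductSpace ℝ E] {k : ℕ∞} :
    ContDiff ℝ k fun x : E => truncatedPower s R ‖x‖ := by
  refine contDiff_regularizedPower_comp_norm.mul ?_
  have hzero : (0 : ℝ) ∉ tsupport fun r : ℝ => 1 - unitCutoff (r / R) := by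
    have hdiv : Tendsto (fun r : ℝ => r / R) (𝓝 0) (𝓝 0) := by
      simpa using (continuous_id.div_const R).tendsto (0 : ℝ)
    rw [notMem_tsupport_iff_eventuallyEq]
    filter_upwards [hdiv.eventually unitCutoff.eventuallyEq_one] with r hr
    rw [hr, Pi.one_apply, sub_self, Pi.zero_apply]
  have hcutoff : ContDiff ℝ k fun r : ℝ => unitCutoff (r / R) :=
    unitCutoff.contDiff.comp (contDiff_id.div_const R)
  have hcomp := contDiff_comp_norm (E := E) (contDiff_const.sub hcutoff) hzero
  simpa only [sub_sub_cancel] using (contDiff_const (c := (1 : ℝ))).sub hcomp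

lemma hasCompactSupport_truncatedPower (hR : R ≠ 0) : HasCompactSupport (truncatedPower s R) := by
  have hcutoff : HasCompactSupport fun r => unitCutoff (R⁻¹ • r) :=
    unitCutoff.hasCompactSupport.comp_smul (inv_ne_zero hR)
  simp only [smul_eq_mul, inv_mul_eq_div] at hcutoff
  exact hcutoff.mul_left

lemma truncatedPower_eventuallyEq (hr : |r| < R) :
    truncatedPower s R =ᶠ[𝓝 r] regularizedPower s := by
  have hR : 0 < R := (abs_nonneg r).trans_lt hr
  filter_upwards [continuous_abs.continuousAt.eventually_lt_const hr] with t ht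
  have hone : unitCutoff (t / R) = 1 := unitCutoff.one_of_mem_closedBall <| by
    rw [mem_closedBall_zero_iff, norm_eq_abs, abs_div, abs_of_pos hR]
    exact (div_le_one hR).mpr ht.le
  rw [truncatedPower, hone, mul_one]

lemma truncatedPower_eventuallyEq_zero (hR : 0 < R) (hr : 2 * R ≤ |r|) :
    truncatedPower s R =ᶠ[𝓝 r] 0 := by
  have hlt : 3 / 2 * R < |r| := by linarith
  filter_upwards [continuous_abs.continuousAt.eventually_const_lt hlt] with t ht
  have hzero : unitCutoff (t / R) = 0 := unitCutoff.zero_of_le_dist <| by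
    rw [dist_zero_right, norm_eq_abs, abs_div, abs_of_pos hR]
    exact (le_div_iff₀ hR).mpr ht.le
  rw [truncatedPower, hzero, mul_zero, Pi.zero_apply]

lemma truncatedPower_add_mul_deriv :
    truncatedPower s R r + r * deriv (truncatedPower s R) r =
      regularizedPower s r * ((1 - s * r ^ 2) / (1 + r ^ 2) * unitCutoff (r / R)
        + r / R * deriv unitCutoff (r / R)) := by
  have hcutoff : HasDerivAt (fun t => unitCutoff (t / R)) (deriv unitCutoff (r / R) * (1 / R)) r :=
    ((unitCutoff.contDiff (n := 1)).differentiable one_ne_zero _).hasDerivAt.comp r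
      ((hasDerivAt_id' r).div_const R)
  have hderiv : deriv (truncatedPower s R) r = _ :=
    (((contDiff_regularizedPower (k := 1)).differentiable one_ne_zero r).hasDerivAt.mul
      hcutoff).deriv
  rw [hderiv, truncatedPower]
  linear_combination unitCutoff (r / R) * regularizedPower_add_mul_deriv (s := s) (r := r)

lemma exists_hardyIntegrand_truncatedPower_le (hs : 1 ≤ s) :
    ∃ C > 0, ∀ R > 0, ∀ r ≥ R,
      hardyIntegrand (s ^ 2) (truncatedPower s R) r ≤ C * R ^ (-(2 * s + 2)) := by
  obtain ⟨M, hM⟩ := exists_abs_mul_deriv_unitCutoff_le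
  have hM0 : 0 ≤ M := (abs_nonneg _).trans (hM 0)
  refine ⟨(s + M) ^ 2, by positivity, fun R hR r hr => ?_⟩
  have hfactor : |(1 - s * r ^ 2) / (1 + r ^ 2) * unitCutoff (r / R)
      + r / R * deriv unitCutoff (r / R)| ≤ s + M := by
    refine (abs_add_le _ _).trans (add_le_add ?_ (hM _))
    rw [abs_mul, abs_of_nonneg unitCutoff.nonneg, ← mul_one s]
    exact mul_le_mul (by simpa using (abs_div_one_add_sq_lt hs (hR.trans_le hr).ne').le)
      unitCutoff.le_one unitCutoff.nonneg (by positivity)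
  calc hardyIntegrand (s ^ 2) (truncatedPower s R) r
      ≤ (truncatedPower s R r + r * deriv (truncatedPower s R) r) ^ 2 :=
        sub_le_self _ (by positivity)
    _ = |(1 - s * r ^ 2) / (1 + r ^ 2) * unitCutoff (r / R)
          + r / R * deriv unitCutoff (r / R)| ^ 2 * regularizedPower s r ^ 2 := by
        rw [truncatedPower_add_mul_deriv, mul_pow, mul_comm, sq_abs]
    _ ≤ (s + M) ^ 2 * R ^ (-(2 * s + 2)) :=
        mul_le_mul (pow_le_pow_left₀ (abs_nonneg _) hfactor 2)
          (regularizedPower_sq_le (by linarith) hR hr) (sq_nonneg _) (sq_nonneg _)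

lemma hardyIntegrand_truncatedPower_le_indicator {a C : ℝ} (hs : 1 ≤ s) (hR : 0 < R)
    (haR : a < R) (hC : ∀ r ≥ R, hardyIntegrand (s ^ 2) (truncatedPower s R) r ≤ C)
    (hr : 0 < r) :
    hardyIntegrand (s ^ 2) (truncatedPower s R) r ≤ (Set.Ico R (2 * R)).indicator (fun _ => C) r -
      (Set.Ioc 0 a).indicator (fun r => -hardyIntegrand (s ^ 2) (regularizedPower s) r) r := by
  rcases lt_or_ge r R with hrR | hRr
  · rw [hardyIntegrand_congr (truncatedPower_eventuallyEq (by rwa [abs_of_pos hr])),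
      Set.indicator_of_notMem (s := Set.Ico R (2 * R)) fun h => hrR.not_ge h.1, zero_sub, le_neg]
    exact Set.indicator_le_self' (fun _ _ =>
      (neg_pos.mpr (hardyIntegrand_regularizedPower_neg hs hr.ne')).le) r
  rw [Set.indicator_of_notMem (s := Set.Ioc 0 a) fun h => (haR.trans_le hRr).not_ge h.2, sub_zero]
  rcases lt_or_ge r (2 * R) with hr2R | h2Rr
  · rw [Set.indicator_of_mem (s := Set.Ico R (2 * R)) ⟨hRr, hr2R⟩]
    exact hC r hRr
  · rw [hardyIntegrand_congr (truncatedPower_eventuallyEq_zero hR (by rwa [abs_of_pos hr])),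
      Set.indicator_of_notMem fun h => h.2.not_ge h2Rr]
    simp [hardyIntegrand]

end TruncatedPower

section Growth

lemma setIntegral_le_setIntegral_of_le_indicator_sub_indicator {X : Type*} [MeasurableSpace X]
    {μ : Measure X} {S A B : Set X} (hS : MeasurableSet S) (hA : MeasurableSet A)
    (hB : MeasurableSet B) (hAS : A ⊆ S) (hBS : B ⊆ S) {D G H : X → ℝ} (hD : IntegrableOn D S μ)
    (hG : IntegrableOn G A μ) (hH : IntegrableOn H B μ) (hD0 : 0 ≤ ∫ x in S, D x ∂μ)
    (hle : ∀ x ∈ S, D x ≤ B.indicator H x - A.indicator G x) :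
    ∫ x in A, G x ∂μ ≤ ∫ x in B, H x ∂μ := by
  have iG := (hG.integrable_indicator hA).integrableOn (s := S)
  have iH := (hH.integrable_indicator hB).integrableOn (s := S)
  have hmono : 0 ≤ ∫ x in S, (B.indicator H x - A.indicator G x) ∂μ :=
    hD0.trans (setIntegral_mono_on hD (iH.sub iG) hS hle)
  rw [integral_sub iH iG, setIntegral_indicator hB, setIntegral_indicator hA,
    Set.inter_eq_right.mpr hBS, Set.inter_eq_right.mpr hAS] at hmono
  exact sub_nonneg.mp hmono

lemma exists_deriv_ne_zero_of_ne {v : ℝ → ℝ} {a b : ℝ} (hab : a < b)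
    (hc : ContinuousOn v (Set.Icc a b)) (hd : DifferentiableOn ℝ v (Set.Ioo a b))
    (hne : v a ≠ v b) : ∃ r ∈ Set.Ioo a b, deriv v r ≠ 0 := by
  obtain ⟨r, hr, hslope⟩ := exists_deriv_eq_slope v hab hc hd
  refine ⟨r, hr, hslope ▸ div_ne_zero (sub_ne_zero.mpr hne.symm) (sub_ne_zero.mpr hab.ne')⟩

variable {s : ℝ} {V : ℝ → ℝ}

lemma setIntegral_mul_hardyIntegrand_le {C R a : ℝ} (hV : Continuous V) (hV0 : ∀ r > 0, 0 ≤ V r)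
    (hs : 1 ≤ s) (hR : 0 < R) (haR : a < R)
    (hC : ∀ r ≥ R, hardyIntegrand (s ^ 2) (truncatedPower s R) r ≤ C)
    (hardy : 0 ≤ ∫ r in Set.Ioi (0 : ℝ), V r * hardyIntegrand (s ^ 2) (truncatedPower s R) r) :
    ∫ r in Set.Ioc 0 a, V r * -hardyIntegrand (s ^ 2) (regularizedPower s) r ≤
      ∫ r in Set.Ico R (2 * R), V r * C := by
  have cz := continuous_hardyIntegrand (c := s ^ 2)
    (contDiff_truncatedPower (s := s) (R := R) (k := 1))
  have cq := continuous_hardyIntegrand (c := s ^ 2) (contDiff_regularizedPower (s := s) (k := 1))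
  refine setIntegral_le_setIntegral_of_le_indicator_sub_indicator measurableSet_Ioi
    measurableSet_Ioc measurableSet_Ico (fun r hr => hr.1) (fun r hr => hR.trans_le hr.1)
    ((hV.mul cz).integrable_of_hasCompactSupport
      (hasCompactSupport_hardyIntegrand (hasCompactSupport_truncatedPower hR.ne')).mul_left
      ).integrableOn
    (((hV.mul cq.neg).integrableOn_Icc (μ := volume)).mono_set Set.Ioc_subset_Icc_self)
    (((hV.mul_const C).integrableOn_Icc (μ := volume)).mono_set Set.Ico_subset_Icc_self)
    hardy fun r (hr : 0 < r) => ?_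
  simp only [Set.indicator_mul_right]
  rw [← mul_sub]
  exact mul_le_mul_of_nonneg_left
    (hardyIntegrand_truncatedPower_le_indicator hs hR haR hC hr) (hV0 r hr)

lemma exists_mul_rpow_le_setIntegral (hV : Continuous V) (hV0 : ∀ r > 0, 0 ≤ V r) {r₁ : ℝ}
    (hr₁ : 0 < r₁) (hVr₁ : 0 < V r₁) (hs : 1 ≤ s)
    (hardy : ∀ R > 0, 0 ≤ ∫ r in Set.Ioi (0 : ℝ),
      V r * hardyIntegrand (s ^ 2) (truncatedPower s R) r) :
    ∃ c > 0, ∃ R₀ > 2, ∀ R ≥ R₀, c * R ^ (2 * s + 2) ≤ ∫ r in Set.Ico R (2 * R), V r := by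
  obtain ⟨C, hC, hCR⟩ := exists_hardyIntegrand_truncatedPower_le hs
  have hgain (r : ℝ) (hr : 0 < r) : 0 < -hardyIntegrand (s ^ 2) (regularizedPower s) r :=
    neg_pos.mpr (hardyIntegrand_regularizedPower_neg hs hr.ne')
  have cgain : Continuous fun r => V r * -hardyIntegrand (s ^ 2) (regularizedPower s) r :=
    hV.mul (continuous_hardyIntegrand (contDiff_regularizedPower (k := 1))).neg
  have hgain_int : 0 < ∫ r in Set.Ioc 0 r₁,
      V r * -hardyIntegrand (s ^ 2) (regularizedPower s) r := by
    rw [← intervalIntegral.integral_of_le hr₁.le]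
    exact intervalIntegral.integral_pos hr₁ cgain.continuousOn
      (fun r hr => mul_nonneg (hV0 r hr.1) (hgain r hr.1).le)
      ⟨r₁, ⟨hr₁.le, le_rfl⟩, mul_pos hVr₁ (hgain r₁ hr₁)⟩
  refine ⟨_, div_pos hgain_int hC, r₁ + 2, by linarith, fun R hR => ?_⟩
  have hR0 : 0 < R := by linarith
  have hle := setIntegral_mul_hardyIntegrand_le (a := r₁) hV hV0 hs hR0 (by linarith)
    (hCR R hR0) (hardy R hR0)
  rw [integral_mul_const, rpow_neg hR0.le] at hle
  rw [div_mul_eq_mul_div, div_le_iff₀ hC, ← le_div_iff₀ (by positivity)]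
  exact hle.trans_eq (by field_simp)

end Growth

lemma exists_pos_deriv_ne_zero_of_comp_norm {E : Type*} [SeminormedAddGroup E] {v : ℝ → ℝ}
    (hv : Differentiable ℝ v) (hnc : ¬ ∃ c, ∀ x : E, v ‖x‖ = c) : ∃ r > 0, deriv v r ≠ 0 := by
  push Not at hnc
  obtain ⟨x, hx⟩ := hnc (v 0)
  have hpos : 0 < ‖x‖ := (norm_nonneg x).lt_of_ne fun h => hx (by rw [← h])
  obtain ⟨r, hr, hne⟩ :=
    exists_deriv_ne_zero_of_ne hpos hv.continuous.continuousOn hv.differentiableOn hx.symm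
  exact ⟨r, hr.1, hne⟩

lemma IsStableSolution.exists_mul_rpow_le_setIntegral_slopeWeight {n : ℕ} (hn : 2 ≤ n)
    {f v : ℝ → ℝ} (hs : IsStableSolution Set.univ f fun x : Euc n => v ‖x‖)
    (hf : ContDiff ℝ 1 f) (hv : ContDiff ℝ 2 v) (hu : ContDiff ℝ 2 fun x : Euc n => v ‖x‖)
    {r₁ : ℝ} (hr₁ : 0 < r₁) (hslope : deriv v r₁ ≠ 0) :
    ∃ c > 0, ∃ R₀ > 2, ∀ R ≥ R₀, c * R ^ (2 * √((n : ℝ) - 1) + 2) ≤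
      ∫ r in Set.Ico R (2 * R), r ^ (n - 1) * slopeWeight (deriv v r) := by
  have : NeZero n := ⟨by lia⟩
  have hn' : 1 ≤ (n : ℝ) - 1 := by
    rw [le_sub_iff_add_le, one_add_one_eq_two]
    exact_mod_cast hn
  refine exists_mul_rpow_le_setIntegral
    ((continuous_pow _).mul (continuous_slopeWeight.comp (hv.continuous_deriv one_le_two)))
    (fun r hr => mul_nonneg (pow_pos hr _).le (slopeWeight_nonneg _)) hr₁
    (mul_pos (pow_pos hr₁ _) (slopeWeight_pos hslope)) (one_le_sqrt.mpr hn') fun R hR => ?_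
  rw [sq_sqrt (zero_le_one.trans hn')]
  exact hs.integral_slopeWeight_nonneg hf hv hu contDiff_truncatedPower
    contDiff_truncatedPower_comp_norm (hasCompactSupport_truncatedPower hR.ne')

lemma setAverage_annulus_slopeWeight {n : ℕ} [NeZero n] {v : ℝ → ℝ} (hv : Differentiable ℝ v)
    {R : ℝ} (hR : 0 < R) :
    ⨍ x in ball (0 : Euc n) (2 * R) \ ball 0 R,
        ‖gradient (fun x => v ‖x‖) x‖ ^ 2 /
          (1 + ‖gradient (fun x => v ‖x‖) x‖ ^ 2) ^ ((3 : ℝ) / 2) =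
      n / (((2 : ℝ) ^ n - 1) * R ^ n) *
        ∫ r in Set.Ico R (2 * R), r ^ (n - 1) * slopeWeight (deriv v r) := by
  rw [setAverage_annulus_eq volume (G := fun r => slopeWeight (deriv v r)) hR (by linarith)
    fun x hx => by rw [norm_gradient_comp_norm_sq hx (hv _), slopeWeight]]
  rw [finrank_euclideanSpace, Fintype.card_fin, mul_pow, sub_one_mul]

theorem stmt_6_general (n : ℕ) (hn : 2 ≤ n) (f : ℝ → ℝ) (u : Euc n → ℝ) (g : ℝ → ℝ)
    (hf : ContDiff ℝ 1 f)
    (hreg : ContDiff ℝ 2 u)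
    (hstable : IsStableSolution (Set.univ : Set (Euc n)) f u)
    (hradial : ∀ x : Euc n, u x = g ‖x‖)
    (hnc : ¬ ∃ c₀ : ℝ, ∀ x : Euc n, u x = c₀) :
    ∃ c > (0:ℝ), ∃ R₀ > (2:ℝ), ∀ R : ℝ, R₀ ≤ R →
      c * R ^ (-(n:ℝ) + 2 * Real.sqrt ((n:ℝ) - 1) + 2) ≤
        ⨍ x in ball (0 : Euc n) (2*R) \ ball (0 : Euc n) R,
          ‖gradient u x‖ ^ 2 / (1 + ‖gradient u x‖ ^ 2) ^ ((3:ℝ)/2) := by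
  have : NeZero n := ⟨by lia⟩
  obtain ⟨v, hv, rfl⟩ := exists_contDiff_profile hreg hradial
  have hv' : Differentiable ℝ v := hv.differentiable two_ne_zero
  obtain ⟨r₁, hr₁, hslope⟩ := exists_pos_deriv_ne_zero_of_comp_norm hv' hnc
  obtain ⟨c, hc, R₀, hR₀, hgrowth⟩ :=
    hstable.exists_mul_rpow_le_setIntegral_slopeWeight hn hf hv hreg hr₁ hslope
  have h2n : (0 : ℝ) < 2 ^ n - 1 := sub_pos.mpr (one_lt_pow₀ one_lt_two (NeZero.ne n))
  refine ⟨n / (2 ^ n - 1) * c, by positivity, R₀, hR₀, fun R hR => ?_⟩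
  have hR0 : 0 < R := by linarith
  calc n / (2 ^ n - 1) * c * R ^ (-(n : ℝ) + 2 * √((n : ℝ) - 1) + 2)
      = n / ((2 ^ n - 1) * R ^ n) * (c * R ^ (2 * √((n : ℝ) - 1) + 2)) := by
        rw [add_assoc, rpow_add hR0, rpow_neg hR0.le, rpow_natCast]
        field_simp
    _ ≤ n / ((2 ^ n - 1) * R ^ n) *
          ∫ r in Set.Ico R (2 * R), r ^ (n - 1) * slopeWeight (deriv v r) :=
        mul_le_mul_of_nonneg_left (hgrowth R hR) (by positivity)
    _ = _ := (setAverage_annulus_slopeWeight hv' hR0).symm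

/-- **Theorem (Lower bound for nonconstant radial stable solutions).**
Let `n ≥ 2`, `f ∈ C¹(ℝ)` and let `u` be a `W^{3,1}_loc(ℝⁿ)` stable solution of
`div(∇u/√(1+|∇u|²)) = -f(u)` in `ℝⁿ`, radially symmetric with respect to the origin.
If `u` is nonconstant, then there are `c > 0` and `R₀ > 2` with
`⨍_{B_{2R}∖B_R} |∇u|²/(1+|∇u|²)^{3/2} ≥ c R^{-n+2√(n-1)+2}` for all `R ≥ R₀`. -/
theorem stmt_6 (n : ℕ) (hn : 2 ≤ n) (f : ℝ → ℝ) (u : Euc n → ℝ) (g : ℝ → ℝ)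
    (hf : ContDiff ℝ 1 f)
    (hreg : ContDiff ℝ 3 u)
    (hstable : IsStableSolution (Set.univ : Set (Euc n)) f u)
    (hradial : ∀ x : Euc n, u x = g ‖x‖)
    (hnc : ¬ ∃ c₀ : ℝ, ∀ x : Euc n, u x = c₀) :
    ∃ c > (0:ℝ), ∃ R₀ > (2:ℝ), ∀ R : ℝ, R₀ ≤ R →
      c * R ^ (-(n:ℝ) + 2 * Real.sqrt ((n:ℝ) - 1) + 2) ≤
        ⨍ x in ball (0 : Euc n) (2*R) \ ball (0 : Euc n) R,
          ‖gradient u x‖ ^ 2 / (1 + ‖gradient u x‖ ^ 2) ^ ((3:ℝ)/2) :=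
  stmt_6_general n hn f u g hf (hreg.of_le (by norm_num)) hstable hradial hnc
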